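/- Let 𝔤 = 𝔤₁ ⊕ ⋯ ⊕ 𝔤_r be a finite-dimensional real Lie algebra that is the direct sum of ideals 𝔤₁, …, 𝔤_r, each of which is a simple Lie algebra with negative-definite Killing form, and let 𝔥 ⊆ 𝔤 be a Lie subalgebra. If k := #{ i : 𝔥 ∩ 𝔤ᵢ ≠ 0 }, then dim N(𝔤,𝔥) ≤ r − k. -/

import Mathlib

/-- The space `N(𝔤,𝔥)` of invariant symmetric bilinear forms on a real Lie algebra `L`
vanishing identically on a subspace `p`. -/
noncomputable def NForms (L : Type*) [LieRing L] [LieAlgebra ℝ L] (p : Submodule ℝ L) :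
    Submodule ℝ (L →ₗ[ℝ] L →ₗ[ℝ] ℝ) where
  carrier := {B | (∀ x y z : L, B ⁅x, y⁆ z = B x ⁅y, z⁆) ∧ (∀ x y : L, B x y = B y x) ∧
    ∀ x ∈ p, ∀ y ∈ p, B x y = 0}
  add_mem' := by
    rintro B C ⟨hB1, hB2, hB3⟩ ⟨hC1, hC2, hC3⟩
    exact ⟨fun x y z => by simp [hB1 x y z, hC1 x y z],
      fun x y => by simp [hB2 x y, hC2 x y],
      fun x hx y hy => by simp [hB3 x hx y hy, hC3 x hx y hy]⟩
  zero_mem' := ⟨fun _ _ _ => by simp, fun _ _ => by simp, fun _ _ _ _ => by simp⟩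
  smul_mem' := by
    rintro c B ⟨h1, h2, h3⟩
    exact ⟨fun x y z => by simp [h1 x y z], fun x y => by simp [h2 x y],
      fun x hx y hy => by simp [h3 x hx y hy]⟩

/-!
On a simple ideal `I` carrying an invariant inner product `K`, here minus the Killing form, every
invariant symmetric form `B` is a multiple `c K`: for an eigenvector `u` of `B` relative to `K` with
eigenvalue `c`, the radical of `B - c K` on `I` is an ideal containing `u`, hence all of `I`. As `K`
is definite, `B` vanishes on `I` as soon as it has one nonzero isotropic vector there. Distinct
simple ideals commute and are perfect, so they are orthogonal for every invariant form. Hence an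
invariant symmetric form is determined by the values `B v v` for one nonzero `v` in each `𝔤ᵢ`; for
forms in `N(𝔤,𝔥)`, such a vector can be taken isotropic whenever `𝔥 ∩ 𝔤ᵢ ≠ 0`.
-/

open Module LieAlgebra LieAlgebra.InvariantForm

section Spectral

lemma exists_eigenvector_of_isSymm {E : Type*} [NormedAddCommGroup E] [InnerProductSpace ℝ E]
    [FiniteDimensional ℝ E] [Nontrivial E] {B : LinearMap.BilinForm ℝ E} (hB : B.IsSymm) :
    ∃ c : ℝ, ∃ u : E, u ≠ 0 ∧ B u = c • innerₗ E u := by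
  let T : E →ₗ[ℝ] E :=
    (InnerProductSpace.toDual ℝ E).symm.toLinearMap ∘ₗ
      LinearMap.toContinuousLinearMap.toLinearMap ∘ₗ B
  have inner_T (x y : E) : inner ℝ (T x) y = B x y := InnerProductSpace.toDual_symm_apply
  have hT : T.IsSymmetric := fun x y ↦ by rw [inner_T, real_inner_comm, inner_T, hB.eq]
  obtain ⟨c, hc⟩ : ∃ c : ℝ, End.HasEigenvalue T c :=
    ⟨_, hT.hasEigenvalue_iSup_of_finiteDimensional⟩
  obtain ⟨u, hu⟩ := hc.exists_hasEigenvector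
  refine ⟨c, u, hu.2, LinearMap.ext fun y ↦ ?_⟩
  simp [← inner_T, hu.apply_eq_smul, inner_smul_left]

lemma exists_eigenvector_of_isSymm_of_posDef {V : Type*} [AddCommGroup V] [Module ℝ V]
    [FiniteDimensional ℝ V] [Nontrivial V] {K B : LinearMap.BilinForm ℝ V} (hK : K.IsSymm)
    (hpos : ∀ x, x ≠ 0 → 0 < K x x) (hB : B.IsSymm) :
    ∃ c : ℝ, ∃ u : V, u ≠ 0 ∧ B u = c • K u := by
  let core : InnerProductSpace.Core ℝ V :=
    { inner := fun x y ↦ K x y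
      conj_inner_symm := fun x y ↦ hK.eq y x
      re_inner_nonneg := fun x ↦ by
        obtain rfl | hx := eq_or_ne x 0
        · simp
        · exact (hpos x hx).le
      add_left := fun x y z ↦ by simp
      smul_left := fun x y r ↦ by simp
      definite := fun x hx ↦ by_contra fun hx0 ↦ (hpos x hx0).ne' hx }
  let : NormedAddCommGroup V := core.toNormedAddCommGroup
  let : InnerProductSpace ℝ V := InnerProductSpace.ofCore core.toCore
  exact exists_eigenvector_of_isSymm hB

end Spectral

section SimpleIdeals

variable {R L : Type*} [CommRing R] [LieRing L] [LieAlgebra R L]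

lemma isAtom_of_isSimple (I : LieIdeal R L) [IsSimple R I] : IsAtom I := by
  refine ⟨fun hI ↦ IsSimple.non_abelian R (L := I) ?_, fun J hJ ↦ ?_⟩
  · subst hI
    infer_instance
  · rcases IsSimple.eq_bot_or_eq_top (J.comap I.incl) with h | h
    · exact (LieIdeal.comap_incl_eq_bot.mp h).symm.eq_bot_of_le hJ.le
    · exact absurd (LieIdeal.comap_incl_eq_top.mp h) hJ.not_ge

lemma lie_top_le_orthogonal_of_lie_eq_bot {M : Type*} [AddCommGroup M] [Module R M]
    [LieRingModule L M] {Φ : LinearMap.BilinForm R M} (hΦ : Φ.lieInvariant L) {I : LieIdeal R L}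
    {N : LieSubmodule R L M} (hIN : ⁅I, N⁆ = ⊥) :
    ⁅I, (⊤ : LieSubmodule R L M)⁆ ≤ orthogonal Φ hΦ N := by
  rw [LieSubmodule.lie_le_iff]
  intro x hx m _
  rw [mem_orthogonal]
  intro n hn
  have hxn : ⁅x, n⁆ = 0 := (LieSubmodule.lie_eq_bot_iff N I).mp hIN x hx n hn
  rw [← neg_eq_zero, ← hΦ, hxn, map_zero, LinearMap.zero_apply]

lemma le_orthogonal_of_isSimple_of_ne {Φ : LinearMap.BilinForm R L} (hΦ : Φ.lieInvariant L)
    {I J : LieIdeal R L} [IsSimple R I] [IsSimple R J] (hIJ : I ≠ J) : I ≤ orthogonal Φ hΦ J := by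
  have hI : IsAtom I := isAtom_of_isSimple I
  have hdisj : Disjoint I J := hI.disjoint_of_ne (isAtom_of_isSimple J) hIJ
  have hcomm : ⁅I, J⁆ = ⊥ := le_bot_iff.mp ((LieSubmodule.lie_le_inf I J).trans hdisj.le_bot)
  calc I = ⁅I, I⁆ :=
        (lie_eq_self_of_isAtom_of_nonabelian I hI (IsSimple.non_abelian R)).symm
    _ ≤ ⁅I, (⊤ : LieIdeal R L)⁆ := LieSubmodule.mono_lie_right I le_top
    _ ≤ orthogonal Φ hΦ J := lie_top_le_orthogonal_of_lie_eq_bot hΦ hcomm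

end SimpleIdeals

lemma neg_killingForm_lieInvariant (R L : Type*) [CommRing R] [LieRing L] [LieAlgebra R L] :
    (-killingForm R L).lieInvariant L := fun x y z ↦
  congrArg Neg.neg (LieModule.traceForm_lieInvariant R L L x y z)

section InvariantForms

variable {L : Type*} [LieRing L] [LieAlgebra ℝ L] {K B : LinearMap.BilinForm ℝ L}

lemma exists_eq_mul_on_of_isSimple (hK : K.lieInvariant L) (hKsymm : K.IsSymm)
    (hB : B.lieInvariant L) (hBsymm : B.IsSymm) (I : LieIdeal ℝ L) [IsSimple ℝ I]
    [FiniteDimensional ℝ I] (hpos : ∀ x ∈ I, x ≠ 0 → 0 < K x x) :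
    ∃ c : ℝ, ∀ x ∈ I, ∀ y ∈ I, B x y = c * K x y := by
  have hI : IsAtom I := isAtom_of_isSimple I
  have : Nontrivial I.toSubmodule := (LieSubmodule.nontrivial_iff_ne_bot ℝ L L).mpr hI.1
  obtain ⟨c, u, hu0, hu⟩ := exists_eigenvector_of_isSymm_of_posDef
    (K := K.restrict I.toSubmodule) (B := B.restrict I.toSubmodule) (hKsymm.restrict _)
    (fun x hx ↦ hpos x x.2 (by simpa using hx)) (hBsymm.restrict _)
  have hinv : (B - c • K).lieInvariant L := fun x y z ↦ by
    simp only [LinearMap.sub_apply, LinearMap.smul_apply, hB x y z, hK x y z, smul_neg]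
    abel
  have hu_mem : (u : L) ∈ orthogonal (B - c • K) hinv I := by
    rw [mem_orthogonal]
    intro x hx
    have hux : B u x = c * K u x := LinearMap.congr_fun hu ⟨x, hx⟩
    simp [hBsymm.eq x u, hKsymm.eq x u, hux]
  have hle : I ≤ orthogonal (B - c • K) hinv I := by
    refine hI.not_disjoint_iff_le.mp fun hdisj ↦ hu0 (Subtype.ext ?_)
    exact (LieSubmodule.mem_bot _).mp (hdisj.le_bot ⟨u.2, hu_mem⟩)
  refine ⟨c, fun x hx y hy ↦ sub_eq_zero.mp ?_⟩
  exact (mem_orthogonal _ hinv I y).mp (hle hy) x hx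

lemma le_orthogonal_self_of_isotropic (hK : K.lieInvariant L) (hKsymm : K.IsSymm)
    (hB : B.lieInvariant L) (hBsymm : B.IsSymm) {I : LieIdeal ℝ L} [IsSimple ℝ I]
    [FiniteDimensional ℝ I] (hpos : ∀ x ∈ I, x ≠ 0 → 0 < K x x) {v : L} (hv : v ∈ I) (hv0 : v ≠ 0)
    (hBv : B v v = 0) : I ≤ orthogonal B hB I := by
  obtain ⟨c, hc⟩ := exists_eq_mul_on_of_isSimple hK hKsymm hB hBsymm I hpos
  have hc0 : c = 0 :=
    (mul_eq_zero.mp ((hc v hv v hv).symm.trans hBv)).resolve_right (hpos v hv hv0).ne'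
  intro y hy
  rw [mem_orthogonal]
  intro x hx
  rw [hc x hx y hy, hc0, zero_mul]

variable {ι : Type*} {g : ι → LieIdeal ℝ L}

lemma eq_zero_of_forall_le_orthogonal (hsup : ⨆ i, (g i).toSubmodule = ⊤)
    (hB : B.lieInvariant L) (hg : ∀ i j, g i ≤ orthogonal B hB (g j)) : B = 0 := by
  have apply_eq_zero (j : ι) (x : L) (hx : x ∈ g j) : B x = 0 := by
    rw [← LinearMap.ker_eq_top, ← top_le_iff, ← hsup]
    exact iSup_le fun i y hy ↦ (mem_orthogonal B hB (g j) y).mp (hg i j hy) x hx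
  rw [← LinearMap.ker_eq_top, ← top_le_iff, ← hsup]
  exact iSup_le apply_eq_zero

lemma eq_zero_of_forall_isotropic [∀ i, FiniteDimensional ℝ (g i)]
    (hsimple : ∀ i, IsSimple ℝ (g i)) (hsup : ⨆ i, (g i).toSubmodule = ⊤)
    (hK : K.lieInvariant L) (hKsymm : K.IsSymm) (hpos : ∀ i, ∀ x ∈ g i, x ≠ 0 → 0 < K x x)
    (hB : B.lieInvariant L) (hBsymm : B.IsSymm)
    {v : ι → L} (hv : ∀ i, v i ∈ g i) (hv0 : ∀ i, v i ≠ 0) (hBv : ∀ i, B (v i) (v i) = 0) :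
    B = 0 := by
  refine eq_zero_of_forall_le_orthogonal hsup hB fun i j ↦ ?_
  by_cases hij : g i = g j
  · rw [← hij]
    exact le_orthogonal_self_of_isotropic hK hKsymm hB hBsymm (hpos i) (hv i) (hv0 i) (hBv i)
  · exact le_orthogonal_of_isSimple_of_ne hB hij

end InvariantForms

lemma exists_mem_ne_zero_mem_of_inf_ne_bot {R M : Type*} [Semiring R] [AddCommMonoid M]
    [Module R M] (p : Submodule R M) {q : Submodule R M} (hq : q ≠ ⊥) :
    ∃ v ∈ q, v ≠ 0 ∧ (p ⊓ q ≠ ⊥ → v ∈ p) := by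
  by_cases hpq : p ⊓ q = ⊥
  · obtain ⟨v, hv, hv0⟩ := q.exists_mem_ne_zero_of_ne_bot hq
    exact ⟨v, hv, hv0, fun h ↦ absurd hpq h⟩
  · obtain ⟨v, hv, hv0⟩ := (p ⊓ q).exists_mem_ne_zero_of_ne_bot hpq
    exact ⟨v, hv.2, hv0, fun _ ↦ hv.1⟩

section NForms

variable {L : Type*} [LieRing L] [LieAlgebra ℝ L]

lemma lieInvariant_of_mem_NForms {p : Submodule ℝ L} {B : LinearMap.BilinForm ℝ L}
    (hB : B ∈ NForms L p) : B.lieInvariant L := fun x y z ↦ by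
  rw [← lie_skew, map_neg, LinearMap.neg_apply, hB.1]

variable {ι : Type*} [Finite ι] {g : ι → LieIdeal ℝ L} [∀ i, FiniteDimensional ℝ (g i)]
  {K : LinearMap.BilinForm ℝ L}

lemma finrank_NForms_le_card_inf_eq_bot (hsimple : ∀ i, IsSimple ℝ (g i))
    (hsup : ⨆ i, (g i).toSubmodule = ⊤) (hK : K.lieInvariant L) (hKsymm : K.IsSymm)
    (hpos : ∀ i, ∀ x ∈ g i, x ≠ 0 → 0 < K x x) (p : Submodule ℝ L) :
    finrank ℝ (NForms L p) ≤ Nat.card {i // p ⊓ (g i).toSubmodule = ⊥} := by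
  have hne (i : ι) : (g i).toSubmodule ≠ ⊥ :=
    (LieSubmodule.toSubmodule_eq_bot _).not.mpr (isAtom_of_isSimple (g i)).1
  choose v hv hv0 hvp using fun i ↦ exists_mem_ne_zero_mem_of_inf_ne_bot p (hne i)
  let values : NForms L p →ₗ[ℝ] {i // p ⊓ (g i).toSubmodule = ⊥} → ℝ :=
    LinearMap.pi fun i ↦ LinearMap.applyₗ (v i) ∘ₗ LinearMap.applyₗ (v i) ∘ₗ (NForms L p).subtype
  have values_injective : Function.Injective values := by
    -- Instance search does not find this structure on submodules of an iterated hom space.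
    let : AddCommGroup (NForms L p) := Module.addCommMonoidToAddCommGroup ℝ
    rw [injective_iff_map_eq_zero]
    intro B hB
    refine Subtype.ext (eq_zero_of_forall_isotropic hsimple hsup hK hKsymm hpos
      (lieInvariant_of_mem_NForms B.2) ⟨B.2.2.1⟩ hv hv0 fun i ↦ ?_)
    by_cases hi : p ⊓ (g i).toSubmodule = ⊥
    · exact congrFun hB ⟨i, hi⟩
    · exact B.2.2.2 _ (hvp i hi) _ (hvp i hi)
  have := Fintype.ofFinite {i // p ⊓ (g i).toSubmodule = ⊥}
  calc finrank ℝ (NForms L p)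
      ≤ finrank ℝ ({i // p ⊓ (g i).toSubmodule = ⊥} → ℝ) :=
        LinearMap.finrank_le_finrank_of_injective values_injective
    _ = Nat.card {i // p ⊓ (g i).toSubmodule = ⊥} := by
        rw [finrank_fintype_fun_eq_card, Nat.card_eq_fintype_card]

theorem stmt13_general (hsimple : ∀ i, IsSimple ℝ (g i)) (hsup : ⨆ i, (g i).toSubmodule = ⊤)
    (hK : K.lieInvariant L) (hKsymm : K.IsSymm) (hpos : ∀ i, ∀ x ∈ g i, x ≠ 0 → 0 < K x x)
    (p : Submodule ℝ L) :
    finrank ℝ (NForms L p) ≤ Nat.card ι - Nat.card {i // p ⊓ (g i).toSubmodule ≠ ⊥} := by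
  classical
  have hcard := Nat.card_congr (Equiv.sumCompl fun i ↦ p ⊓ (g i).toSubmodule = ⊥)
  rw [Nat.card_sum] at hcard
  have hle := finrank_NForms_le_card_inf_eq_bot hsimple hsup hK hKsymm hpos p
  exact hle.trans (Nat.le_sub_of_add_le hcard.le)

end NForms

/-- Let `𝔤 = 𝔤₁ ⊕ ⋯ ⊕ 𝔤ᵣ` be a direct sum of ideals, each a simple Lie
algebra with negative-definite Killing form, and let `𝔥 ⊆ 𝔤` be a Lie subalgebra.  If
`k = #{ i | 𝔥 ∩ 𝔤ᵢ ≠ 0 }` then `dim N(𝔤,𝔥) ≤ r − k`. -/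
theorem stmt13 {L : Type*} [LieRing L] [LieAlgebra ℝ L] [FiniteDimensional ℝ L]
    (r : ℕ) (g : Fin r → LieIdeal ℝ L)
    (hsimple : ∀ i, LieAlgebra.IsSimple ℝ ↥(g i))
    (hneg : ∀ i, ∀ x ∈ g i, x ≠ 0 → killingForm ℝ L x x < 0)
    (hsup : (⨆ i, (LieSubmodule.toSubmodule (g i) : Submodule ℝ L)) = ⊤)
    (hindep : iSupIndep (fun i => (LieSubmodule.toSubmodule (g i) : Submodule ℝ L)))
    (h : LieSubalgebra ℝ L) :
    Module.finrank ℝ ↥(NForms L h.toSubmodule) ≤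
      r - Nat.card {i : Fin r //
        h.toSubmodule ⊓ (LieSubmodule.toSubmodule (g i) : Submodule ℝ L) ≠ ⊥} := by
  simpa only [Nat.card_fin] using stmt13_general hsimple hsup
    (neg_killingForm_lieInvariant ℝ L)
    (LinearMap.BilinForm.IsSymm.neg ⟨LieModule.traceForm_comm ℝ L L⟩)
    (fun i x hx hx0 ↦ neg_pos.mpr (hneg i x hx hx0)) h.toSubmodule
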